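/- Assume (Σ_n, T, (φ_n)) satisfies property (H*) with Hölder parameter r. Then for every k ∈ ℕ₀ and every r-Hölder continuous function f_k : Σ_k → ℝ, one has D̄_{k+n_k}(ℒ^{n_k}_k(f_k)) ≤ D̄_k(f_k), i.e. the Ruelle iterate over n_k steps does not increase the Lipschitz constant taken with respect to the rescaled truncated metrics d̄. -/

import Mathlib

open MeasureTheory Real Filter

namespace NSShift

/-- The ambient sequence space `ℕ^ℕ`. -/
abbrev Seq := ℕ → ℕ

/-- The shift map `T`. -/
def shift (x : Seq) : Seq := fun i => x (i + 1)

/-- Prepend one symbol to a sequence. -/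
def cons (a : ℕ) (x : Seq) : Seq := fun i =>
  match i with
  | 0 => a
  | j + 1 => x j

/-- The non-stationary shift space `Σ_n` determined by alphabets `W` and
transition relations `A` (`A n i j` means `α^n_{ij} = 1`). -/
def Sig (W : ℕ → Set ℕ) (A : ℕ → ℕ → ℕ → Prop) (n : ℕ) : Set Seq :=
  {x | (∀ i, x i ∈ W (n + i)) ∧ ∀ i, A (n + i) (x i) (x (i + 1))}

/-- `x` and `y` agree in their first `k` coordinates (lie in a common `k`-cylinder). -/
def agrees (x y : Seq) (k : ℕ) : Prop := ∀ i < k, x i = y i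

open scoped Classical in
/-- The shift metric `d_r(x,y) = r^{min{i : x_i ≠ y_i}}`. -/
noncomputable def dr (r : ℝ) (x y : Seq) : ℝ :=
  if x = y then 0 else r ^ sInf {i | x i ≠ y i}

/-- `f` is locally `(r,m)`-Hölder continuous with Hölder constant `κ` of index `m` on `S`:
`V_k(f) ≤ κ r^k` for all `k ≥ m`. -/
def HolderOn (S : Set Seq) (r κ : ℝ) (m : ℕ) (f : Seq → ℝ) : Prop :=
  ∀ k, m ≤ k → ∀ x ∈ S, ∀ y ∈ S, agrees x y k → |f x - f y| ≤ κ * r ^ k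

/-- The Birkhoff sum `S_n(φ_k) = Σ_{i=0}^{n-1} φ_{k+i} ∘ T^i`. -/
noncomputable def birkhoff (φ : ℕ → Seq → ℝ) (k n : ℕ) (x : Seq) : ℝ :=
  ∑ i ∈ Finset.range n, φ (k + i) (shift^[i] x)

/-- `log B_m = Σ_{i=1}^{m} κ_{m−i} r^i`. -/
noncomputable def logB (κ : ℕ → ℝ) (r : ℝ) (m : ℕ) : ℝ :=
  ∑ i ∈ Finset.Icc 1 m, κ (m - i) * r ^ i

/-- `B_m = exp Σ_{i=1}^{m} κ_{m−i} r^i`. -/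
noncomputable def Bconst (κ : ℕ → ℝ) (r : ℝ) (m : ℕ) : ℝ := Real.exp (logB κ r m)


open scoped Classical in
/-- The Ruelle operator `ℒ_k(f)(x) = Σ_{Ty=x} e^{φ_k(y)} f(y)`, for `x ∈ Σ_{k+1}`. -/
noncomputable def Ruelle (W : ℕ → Set ℕ) (A : ℕ → ℕ → ℕ → Prop) (φ : ℕ → Seq → ℝ)
    (k : ℕ) (f : Seq → ℝ) (x : Seq) : ℝ :=
  ∑' a : ℕ, if cons a x ∈ Sig W A k then Real.exp (φ k (cons a x)) * f (cons a x) else 0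

/-- The iterated Ruelle operator `ℒ^n_k = ℒ_{k+n-1} ∘ ⋯ ∘ ℒ_k`. -/
noncomputable def RuelleIter (W : ℕ → Set ℕ) (A : ℕ → ℕ → ℕ → Prop) (φ : ℕ → Seq → ℝ)
    (k : ℕ) : ℕ → (Seq → ℝ) → Seq → ℝ
  | 0 => fun f => f
  | n + 1 => fun f => Ruelle W A φ (k + n) (RuelleIter W A φ k n f)

/-- `w` is a `k`-admissible word of length `len`. -/
def Adm (W : ℕ → Set ℕ) (A : ℕ → ℕ → ℕ → Prop) (k : ℕ) (w : ℕ → ℕ) (len : ℕ) : Prop :=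
  (∀ i < len, w i ∈ W (k + i)) ∧ ∀ i, i + 1 < len → A (k + i) (w i) (w (i + 1))

/-- Prepend the first `len` symbols of `w` to the sequence `x` (the inverse branch `τ_w`). -/
def prepend (w : ℕ → ℕ) (len : ℕ) (x : Seq) : Seq := fun i =>
  if i < len then w i else x (i - len)

/-- The Lipschitz constant of `f` on `S` with respect to the distance function `d`,
as the least constant `K ≥ 0` with `|f x − f y| ≤ K d(x,y)` on `S`. -/
noncomputable def LipC (S : Set Seq) (d : Seq → Seq → ℝ) (f : Seq → ℝ) : ℝ :=
  sInf {K : ℝ | 0 ≤ K ∧ ∀ x ∈ S, ∀ y ∈ S, |f x - f y| ≤ K * d x y}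

/-- The Vasershtein (Wasserstein) distance of two Borel measures with respect to the
cost function `d`, as the infimum of `∫ d dm` over couplings `m`. -/
noncomputable def Wass (d : Seq → Seq → ℝ) (μ ν : Measure Seq) : ℝ :=
  sInf {t : ℝ | ∃ m : Measure (Seq × Seq),
    m.map Prod.fst = μ ∧ m.map Prod.snd = ν ∧ t = ∫ p, d p.1 p.2 ∂m}

/-- The dual Ruelle operator `ℒ^*_k` on Borel measures, satisfying
`∫ f d(ℒ^*_k μ) = ∫ ℒ_k(f) dμ`. -/
noncomputable def dualRuelle (W : ℕ → Set ℕ) (A : ℕ → ℕ → ℕ → Prop) (φ : ℕ → Seq → ℝ)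
    (k : ℕ) (μ : Measure Seq) : Measure Seq :=
  Measure.sum fun a : ℕ =>
    (μ.withDensity fun x =>
      ENNReal.ofReal ((Sig W A k).indicator (fun y => Real.exp (φ k y)) (cons a x))).map (cons a)

/-- The iterated dual operator `(ℒ^n_k)^* = ℒ^*_k ∘ ⋯ ∘ ℒ^*_{k+n-1}`. -/
noncomputable def dualRuelleIter (W : ℕ → Set ℕ) (A : ℕ → ℕ → ℕ → Prop) (φ : ℕ → Seq → ℝ) :
    (k : ℕ) → ℕ → Measure Seq → Measure Seq
  | _, 0, μ => μ
  | k, n + 1, μ => dualRuelle W A φ k (dualRuelleIter W A φ (k + 1) n μ)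

/-- A non-stationary shift space `((Σ_n), T, (φ_n))` satisfying property `(H*)`, together
with the choices of the constants `β`, `n_k`, base letters `o_k`, mixing times `m_k`,
connecting words `u(x)` and lower bounds `C_k` used in the coupling construction. -/
structure HstarSystem where
  /-- the alphabets `𝒲¹_n` -/
  W : ℕ → Set ℕ
  /-- the transition matrices: `A n i j` iff `α^n_{ij} = 1` -/
  A : ℕ → ℕ → ℕ → Prop
  /-- the potentials `φ_n : Σ_n → ℝ` -/
  φ : ℕ → Seq → ℝ
  /-- the Hölder parameter -/
  r : ℝ
  /-- the parameter `β ∈ (0,1)` -/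
  β : ℝ
  /-- the Hölder constants `κ_n` of `φ_n` -/
  κ : ℕ → ℝ
  /-- the finite set `ℐ` from the big preimages property -/
  I : Finset ℕ
  /-- the infinite set `𝒦` from the big preimages property -/
  K : Set ℕ
  /-- the base letters `o_k ∈ 𝒲¹_k` -/
  o : ℕ → ℕ
  /-- the integers `n_k` -/
  nseq : ℕ → ℕ
  /-- the mixing times `m_k` -/
  mseq : ℕ → ℕ
  /-- the connecting words `u(x) ∈ 𝒲^{m_k}_k` (as sequences; only the first `m_k`
  symbols are relevant) -/
  u : ℕ → Seq → Seq
  /-- the constants `C_k` -/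
  Cseq : ℕ → ℝ
  hr : 0 < r ∧ r < 1
  hβ : 0 < β ∧ β < 1
  κnonneg : ∀ n, 0 ≤ κ n
  hKinf : K.Infinite
  /-- no zero rows -/
  row : ∀ n, ∀ i ∈ W n, ∃ j ∈ W (n + 1), A n i j
  /-- no zero columns -/
  col : ∀ n, ∀ i ∈ W (n + 1), ∃ j ∈ W n, A n j i
  /-- topological mixing -/
  mixing : ∀ k : ℕ, ∀ a ∈ W k, ∀ b : ℕ, ∃ N : ℕ, ∀ n, N ≤ n → b ∈ W (k + n) →
    ∃ x ∈ Sig W A k, x 0 = a ∧ x n = b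
  /-- big preimages along `𝒦` -/
  bigPre : ∀ n ∈ K, 1 ≤ n → ∀ a ∈ W n, ∃ b ∈ I, (b : ℕ) ∈ W (n - 1) ∧ A (n - 1) b a
  /-- `ℒ_n(1) = 1` -/
  normalized : ∀ k, ∀ x ∈ Sig W A (k + 1), Ruelle W A φ k (fun _ => 1) x = 1
  /-- `φ_n` is locally `(r,2)`-Hölder for `n ∉ 𝒦` -/
  holder2 : ∀ n ∉ K, HolderOn (Sig W A n) r (κ n) 2 (φ n)
  /-- `φ_n` is locally `(r,1)`-Hölder for `n ∈ 𝒦` -/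
  holder1 : ∀ n ∈ K, HolderOn (Sig W A n) r (κ n) 1 (φ n)
  ho : ∀ k, o k ∈ W k
  /-- `n_k ≥ ⌊−log α_k / log r⌋ + 1` where `α_k = B_k/β` -/
  hn : ∀ k, (⌊-Real.log (Bconst κ r k / β) / Real.log r⌋ + 1 : ℤ) ≤ (nseq k : ℤ)
  /-- `m_k ≥ 1`, `k + m_k ∈ 𝒦` -/
  hm_mem : ∀ k, 1 ≤ mseq k ∧ k + mseq k ∈ K
  /-- `(A_k ⋯ A_{k+m_k−2})_{o_k j} ≥ 1` for all `j ∈ ℐ ∩ 𝒲¹_{k+m_k−1}` -/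
  hm_conn : ∀ k, ∀ j ∈ I, (j : ℕ) ∈ W (k + mseq k - 1) →
    ∃ w : ℕ → ℕ, Adm W A k w (mseq k) ∧ w 0 = o k ∧ w (mseq k - 1) = j
  /-- minimality of `m_k` -/
  hm_min : ∀ k n, (1 ≤ n ∧ k + n ∈ K ∧ ∀ j ∈ I, (j : ℕ) ∈ W (k + n - 1) →
      ∃ w : ℕ → ℕ, Adm W A k w n ∧ w 0 = o k ∧ w (n - 1) = j) → mseq k ≤ n
  /-- the connecting word `u(x)` starts at `o_k`, ends in `ℐ`, and
  `x ∈ T^{m_k}([u(x)]_k)` -/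
  hu : ∀ k, ∀ x ∈ Sig W A (k + mseq k), prepend (u k x) (mseq k) x ∈ Sig W A k ∧
    u k x 0 = o k ∧ u k x (mseq k - 1) ∈ I
  hC_pos : ∀ k, 0 < Cseq k
  /-- `C_k` is a lower bound for `e^{S_{m_k} φ_k (τ_{u(x)} x)}` -/
  hC_le : ∀ k, ∀ x ∈ Sig W A (k + mseq k),
    Cseq k ≤ Real.exp (birkhoff φ k (mseq k) (prepend (u k x) (mseq k) x))

namespace HstarSystem

variable (S : HstarSystem)

/-- `α_k := B_k / β`. -/
noncomputable def alphaC (k : ℕ) : ℝ := Bconst S.κ S.r k / S.β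

/-- the metric `d̄_k(x,y) := min{1, α_k d_r(x,y)}`. -/
noncomputable def dbar (k : ℕ) (x y : Seq) : ℝ := min 1 (S.alphaC k * dr S.r x y)

/-- `s_k := 1 − (1 − r^{n_k} α_k) C_{k+n_k}/B_{k+n_k}`. -/
noncomputable def sconst (k : ℕ) : ℝ :=
  1 - (1 - S.r ^ S.nseq k * S.alphaC k) * S.Cseq (k + S.nseq k) / Bconst S.κ S.r (k + S.nseq k)

/-- `t_k := max{β, s_k}`. -/
noncomputable def tconst (k : ℕ) : ℝ := max S.β (S.sconst k)

/-- `l_k := n_k + m_{k+n_k}`. -/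
def lconst (k : ℕ) : ℕ := S.nseq k + S.mseq (k + S.nseq k)

end HstarSystem

/-! Normalization makes `ℒ_k f x` an average of `f` over the preimages of `x`, so `ℒ_k` commutes
with subtracting constants and does not enlarge the range of `f`. If `x` and `y` agree in their
first `j ≥ 1` coordinates, their preimages are paired by the branches `a ↦ (a x, a y)`, and each
step of the iteration distorts the weights by at most `exp (κ_m r^{j+1})`. These errors accumulate
to exactly `r^j log B_{k+n}`, so a nonnegative `f ≤ K` with Lipschitz constant `K` satisfies
`ℒ^n f x ≤ exp (r^j log B_{k+n}) (ℒ^n f y + K α_k r^{n+j})`.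
Since `α_k r^n ≤ 1`, this gives `ℒ^n f x - ℒ^n f y ≤ K (1 + log B_{k+n}) r^j ≤ K α_{k+n} r^j`.
Where the truncated metric equals `1`, the bound on the range suffices. -/

section Metric

variable {x y : Seq} {r : ℝ} {j : ℕ}

theorem agrees_cons (h : agrees x y j) (a : ℕ) : agrees (cons a x) (cons a y) (j + 1)
  | 0, _ => rfl
  | i + 1, hi => h i (Nat.lt_of_succ_lt_succ hi)

theorem dr_self (r : ℝ) (x : Seq) : dr r x x = 0 :=
  if_pos rfl

theorem dr_comm (r : ℝ) (x y : Seq) : dr r x y = dr r y x := by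
  rcases eq_or_ne x y with rfl | hxy
  · rfl
  · simp only [dr, if_neg hxy, if_neg hxy.symm, ne_comm]

theorem exists_agrees_dr_eq_pow (r : ℝ) (hxy : x ≠ y) : ∃ j, agrees x y j ∧ dr r x y = r ^ j :=
  ⟨sInf {i | x i ≠ y i}, fun _ hi => not_not.mp (Nat.notMem_of_lt_sInf hi), if_neg hxy⟩

theorem dr_nonneg (hr : 0 ≤ r) (x y : Seq) : 0 ≤ dr r x y := by
  unfold dr
  split_ifs <;> positivity

theorem dr_le_pow_of_agrees (hr0 : 0 ≤ r) (hr1 : r ≤ 1) (h : agrees x y j) :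
    dr r x y ≤ r ^ j := by
  by_cases hxy : x = y
  · rw [hxy, dr_self]
    positivity
  · rw [dr, if_neg hxy]
    have hfirst : sInf {i | x i ≠ y i} ∈ {i | x i ≠ y i} :=
      Nat.sInf_mem (Function.ne_iff.mp hxy)
    exact pow_le_pow_of_le_one hr0 hr1 (not_lt.mp fun hlt => hfirst (h _ hlt))

theorem dr_le_one (hr0 : 0 ≤ r) (hr1 : r ≤ 1) (x y : Seq) : dr r x y ≤ 1 :=
  dr_le_pow_of_agrees (j := 0) hr0 hr1 fun _ hi => absurd hi (Nat.not_lt_zero _)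

/-- The truncated metric `min{1, α d_r}`, for an arbitrary scale `α`; the metric `d̄_k` is the
case `α = α_k`. -/
noncomputable def truncDist (r α : ℝ) (x y : Seq) : ℝ := min 1 (α * dr r x y)

theorem truncDist_comm (r α : ℝ) (x y : Seq) : truncDist r α x y = truncDist r α y x := by
  rw [truncDist, truncDist, dr_comm]

theorem truncDist_le_one (r α : ℝ) (x y : Seq) : truncDist r α x y ≤ 1 :=
  min_le_left _ _

theorem min_one_mul_dr_le_truncDist (hr0 : 0 ≤ r) (hr1 : r ≤ 1) (α : ℝ) (x y : Seq) :
    min 1 α * dr r x y ≤ truncDist r α x y := by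
  have hd := dr_nonneg hr0 x y
  refine le_min ?_ (mul_le_mul_of_nonneg_right (min_le_right 1 α) hd)
  calc min 1 α * dr r x y ≤ 1 * dr r x y := mul_le_mul_of_nonneg_right (min_le_left 1 α) hd
    _ ≤ 1 := (one_mul _).trans_le (dr_le_one hr0 hr1 x y)

end Metric

section Lipschitz

variable {S S' : Set Seq} {d d' : Seq → Seq → ℝ} {f g : Seq → ℝ} {r κ M K : ℝ} {m : ℕ}

/-- `K` is an admissible Lipschitz constant of `f` on `S` for `d`; `LipC S d f` is the infimum of
all such `K`. -/
def IsLipBound (S : Set Seq) (d : Seq → Seq → ℝ) (f : Seq → ℝ) (K : ℝ) : Prop :=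
  0 ≤ K ∧ ∀ x ∈ S, ∀ y ∈ S, |f x - f y| ≤ K * d x y

-- `LipC` takes the junk value `sInf ∅ = 0` when there is no admissible constant.
theorem lipC_le_lipC (hne : ∃ K, IsLipBound S d f K)
    (h : ∀ K, IsLipBound S d f K → IsLipBound S' d' g K) : LipC S' d' g ≤ LipC S d f :=
  csInf_le_csInf ⟨0, fun _ hK => hK.1⟩ hne h

theorem IsLipBound.exists_mapsTo_Icc (hf : IsLipBound S d f K) (hd : ∀ x y, d x y ≤ 1) :
    ∃ c, Set.MapsTo f S (Set.Icc c (c + K)) := by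
  have hosc : ∀ x ∈ S, ∀ y ∈ S, f x - K ≤ f y := fun x hx y hy => by
    have hxy := (le_abs_self _).trans (hf.2 x hx y hy)
    have hK := mul_le_of_le_one_right hf.1 (hd x y)
    linarith
  refine ⟨sInf (f '' S), fun x hx => ⟨?_, ?_⟩⟩
  · exact csInf_le ⟨f x - K, Set.forall_mem_image.mpr (hosc x hx)⟩ (Set.mem_image_of_mem f hx)
  · exact sub_le_iff_le_add.mp
      (le_csInf ⟨_, Set.mem_image_of_mem f hx⟩ (Set.forall_mem_image.mpr (hosc x hx)))

theorem HolderOn.mono_index {m' : ℕ} (hf : HolderOn S r κ m f) (hm : m ≤ m') :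
    HolderOn S r κ m' f :=
  fun k hk => hf k (hm.trans hk)

theorem HolderOn.exists_isLipBound_dr (hr0 : 0 < r) (hr1 : r ≤ 1) (hf : HolderOn S r κ m f)
    (hM : ∀ x ∈ S, |f x| ≤ M) : ∃ K, IsLipBound S (dr r) f K := by
  refine ⟨|κ| + 2 * |M| / r ^ m, by positivity, fun x hx y hy => ?_⟩
  by_cases hxy : x = y
  · simp [hxy, dr_self]
  obtain ⟨j, hj, hd⟩ := exists_agrees_dr_eq_pow r hxy
  rw [hd, add_mul]
  rcases le_or_gt m j with hmj | hjm
  · calc |f x - f y| ≤ κ * r ^ j := hf j hmj x hx y hy hj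
      _ ≤ |κ| * r ^ j := by gcongr; exact le_abs_self κ
      _ ≤ |κ| * r ^ j + 2 * |M| / r ^ m * r ^ j := le_add_of_nonneg_right (by positivity)
  · have hpow : r ^ m ≤ r ^ j := pow_le_pow_of_le_one hr0.le hr1 hjm.le
    calc |f x - f y| ≤ |f x| + |f y| := abs_sub _ _
      _ ≤ 2 * |M| := by linarith [hM x hx, hM y hy, le_abs_self M]
      _ = 2 * |M| / r ^ m * r ^ m := (div_mul_cancel₀ _ (by positivity)).symm
      _ ≤ 2 * |M| / r ^ m * r ^ j := by gcongr
      _ ≤ |κ| * r ^ j + 2 * |M| / r ^ m * r ^ j := le_add_of_nonneg_left (by positivity)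

theorem IsLipBound.truncDist_of_dr {α : ℝ} (hr0 : 0 ≤ r) (hr1 : r ≤ 1) (hα : 0 < α)
    (hf : IsLipBound S (dr r) f K) : IsLipBound S (truncDist r α) f (K / min 1 α) := by
  have hmin : 0 < min 1 α := lt_min one_pos hα
  refine ⟨div_nonneg hf.1 hmin.le, fun x hx y hy => (hf.2 x hx y hy).trans ?_⟩
  rw [div_mul_eq_mul_div, le_div_iff₀ hmin, mul_assoc, mul_comm (dr r x y)]
  exact mul_le_mul_of_nonneg_left (min_one_mul_dr_le_truncDist hr0 hr1 α x y) hf.1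

end Lipschitz

section LogB

variable {κ : ℕ → ℝ} {r : ℝ}

theorem logB_nonneg (hκ : ∀ n, 0 ≤ κ n) (hr : 0 ≤ r) (m : ℕ) : 0 ≤ logB κ r m :=
  Finset.sum_nonneg fun _ _ => mul_nonneg (hκ _) (pow_nonneg hr _)

theorem logB_eq_sum_range (κ : ℕ → ℝ) (r : ℝ) (m : ℕ) :
    logB κ r m = ∑ i ∈ Finset.range m, κ (m - (i + 1)) * r ^ (i + 1) := by
  rw [Finset.range_eq_Ico, Finset.sum_Ico_add' (fun i => κ (m - i) * r ^ i) 0 m 1]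
  rfl

theorem logB_succ (κ : ℕ → ℝ) (r : ℝ) (m : ℕ) :
    logB κ r (m + 1) = r * (κ m + logB κ r m) := by
  rw [logB_eq_sum_range, logB_eq_sum_range, Finset.sum_range_succ', mul_add, Finset.mul_sum,
    add_comm]
  congr 1
  · rw [zero_add, pow_one, Nat.add_sub_cancel, mul_comm]
  · refine Finset.sum_congr rfl fun i _ => ?_
    rw [Nat.add_sub_add_right, pow_succ r (i + 1)]
    ring

end LogB

section Average

variable {W : ℕ → Set ℕ} {A : ℕ → ℕ → ℕ → Prop} {φ : ℕ → Seq → ℝ} {k : ℕ} {x y : Seq}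
  {f g : Seq → ℝ} {c C : ℝ}

theorem cons_mem_sig_iff (hx : x ∈ Sig W A (k + 1)) (a : ℕ) :
    cons a x ∈ Sig W A k ↔ a ∈ W k ∧ A k a (x 0) := by
  refine ⟨fun h => ⟨h.1 0, h.2 0⟩, fun h => ⟨fun i => ?_, fun i => ?_⟩⟩
  · cases i with
    | zero => exact h.1
    | succ i => exact Nat.succ_add_eq_add_succ k i ▸ hx.1 i
  · cases i with
    | zero => exact h.2
    | succ i => exact Nat.succ_add_eq_add_succ k i ▸ hx.2 i

open scoped Classical in
/-- The weight `e^{φ_k(ax)}` of the branch `x ↦ ax` in the sum defining `ℒ_k`, extended by `0` to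
the letters `a` for which `ax` is not in `Σ_k`. -/
noncomputable def branchWeight (W : ℕ → Set ℕ) (A : ℕ → ℕ → ℕ → Prop) (φ : ℕ → Seq → ℝ)
    (k : ℕ) (x : Seq) (a : ℕ) : ℝ :=
  if cons a x ∈ Sig W A k then Real.exp (φ k (cons a x)) else 0

theorem branchWeight_nonneg (a : ℕ) : 0 ≤ branchWeight W A φ k x a := by
  unfold branchWeight
  split_ifs <;> positivity

theorem branchWeight_mul_le_mul {a : ℕ} {u v : ℝ} (h : cons a x ∈ Sig W A k → u ≤ v) :
    branchWeight W A φ k x a * u ≤ branchWeight W A φ k x a * v := by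
  by_cases ha : cons a x ∈ Sig W A k
  · exact mul_le_mul_of_nonneg_left (h ha) (branchWeight_nonneg a)
  · simp [branchWeight, ha]

theorem ruelle_eq_tsum (f : Seq → ℝ) (x : Seq) :
    Ruelle W A φ k f x = ∑' a, branchWeight W A φ k x a * f (cons a x) := by
  simp only [Ruelle, branchWeight, ite_mul, zero_mul]

theorem ruelle_congr (h : Set.EqOn f g (Sig W A k)) : Ruelle W A φ k f = Ruelle W A φ k g := by
  classical
  exact funext fun x => tsum_congr fun a => ite_congr rfl (fun ha => by rw [h ha]) fun _ => rfl

/-- The normalization `ℒ_k(1) = 1` on `Σ_{k+1}`, for all `k`. -/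
def IsNormalized (W : ℕ → Set ℕ) (A : ℕ → ℕ → ℕ → Prop) (φ : ℕ → Seq → ℝ) : Prop :=
  ∀ k, ∀ x ∈ Sig W A (k + 1), Ruelle W A φ k (fun _ => 1) x = 1

namespace IsNormalized

theorem hasSum_branchWeight (hφ : IsNormalized W A φ) (hx : x ∈ Sig W A (k + 1)) :
    HasSum (branchWeight W A φ k x) 1 := by
  have htsum : ∑' a, branchWeight W A φ k x a = 1 := by
    simpa only [ruelle_eq_tsum, mul_one] using hφ k x hx
  have hsummable : Summable (branchWeight W A φ k x) := by
    by_contra hdiv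
    exact zero_ne_one ((tsum_eq_zero_of_not_summable hdiv).symm.trans htsum)
  exact htsum ▸ hsummable.hasSum

theorem hasSum_branchWeight_mul_const (hφ : IsNormalized W A φ) (hx : x ∈ Sig W A (k + 1))
    (c : ℝ) : HasSum (fun a => branchWeight W A φ k x a * c) c := by
  simpa only [one_mul] using (hφ.hasSum_branchWeight hx).mul_right c

theorem hasSum_ruelle (hφ : IsNormalized W A φ) (hx : x ∈ Sig W A (k + 1))
    (hf : Set.MapsTo f (Sig W A k) (Set.Icc c C)) :
    HasSum (fun a => branchWeight W A φ k x a * f (cons a x)) (Ruelle W A φ k f x) := by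
  rw [ruelle_eq_tsum]
  refine (Summable.of_norm_bounded
    (hφ.hasSum_branchWeight_mul_const hx (max |c| |C|)).summable fun a => ?_).hasSum
  rw [norm_mul, Real.norm_of_nonneg (branchWeight_nonneg a)]
  exact branchWeight_mul_le_mul fun ha => abs_le_max_abs_abs (hf ha).1 (hf ha).2

theorem ruelle_mem_Icc (hφ : IsNormalized W A φ) (hx : x ∈ Sig W A (k + 1))
    (hf : Set.MapsTo f (Sig W A k) (Set.Icc c C)) : Ruelle W A φ k f x ∈ Set.Icc c C :=
  have hsum := hφ.hasSum_ruelle hx hf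
  ⟨hasSum_le (fun _ => branchWeight_mul_le_mul fun ha => (hf ha).1)
      (hφ.hasSum_branchWeight_mul_const hx c) hsum,
    hasSum_le (fun _ => branchWeight_mul_le_mul fun ha => (hf ha).2)
      hsum (hφ.hasSum_branchWeight_mul_const hx C)⟩

theorem ruelle_sub_const (hφ : IsNormalized W A φ) (hx : x ∈ Sig W A (k + 1))
    (hf : Set.MapsTo f (Sig W A k) (Set.Icc c C)) (b : ℝ) :
    Ruelle W A φ k (fun z => f z - b) x = Ruelle W A φ k f x - b := by
  rw [ruelle_eq_tsum]
  simp only [mul_sub]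
  exact ((hφ.hasSum_ruelle hx hf).sub (hφ.hasSum_branchWeight_mul_const hx b)).tsum_eq

theorem mapsTo_ruelleIter (hφ : IsNormalized W A φ)
    (hf : Set.MapsTo f (Sig W A k) (Set.Icc c C)) (n : ℕ) :
    Set.MapsTo (RuelleIter W A φ k n f) (Sig W A (k + n)) (Set.Icc c C) := by
  induction n with
  | zero => exact hf
  | succ n ih => exact fun x hx => hφ.ruelle_mem_Icc hx ih

theorem ruelleIter_sub_const (hφ : IsNormalized W A φ)
    (hf : Set.MapsTo f (Sig W A k) (Set.Icc c C)) (b : ℝ) (n : ℕ) :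
    Set.EqOn (RuelleIter W A φ k n fun z => f z - b) (fun z => RuelleIter W A φ k n f z - b)
      (Sig W A (k + n)) := by
  induction n with
  | zero => exact fun _ _ => rfl
  | succ n ih =>
    intro x hx
    calc Ruelle W A φ (k + n) (RuelleIter W A φ k n fun z => f z - b) x
        = Ruelle W A φ (k + n) (fun z => RuelleIter W A φ k n f z - b) x := by
          rw [ruelle_congr ih]
      _ = Ruelle W A φ (k + n) (RuelleIter W A φ k n f) x - b :=
          hφ.ruelle_sub_const hx (hφ.mapsTo_ruelleIter hf n) b

theorem ruelle_le_exp_mul_ruelle_add (hφ : IsNormalized W A φ) {δ t ε : ℝ}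
    (hx : x ∈ Sig W A (k + 1)) (hy : y ∈ Sig W A (k + 1)) (hxy : x 0 = y 0)
    (hf : Set.MapsTo f (Sig W A k) (Set.Icc 0 C))
    (hδ : ∀ a, cons a x ∈ Sig W A k → cons a y ∈ Sig W A k →
      φ k (cons a x) ≤ δ + φ k (cons a y))
    (ht : ∀ a, cons a x ∈ Sig W A k → cons a y ∈ Sig W A k →
      f (cons a x) ≤ Real.exp t * (f (cons a y) + ε)) :
    Ruelle W A φ k f x ≤ Real.exp (δ + t) * (Ruelle W A φ k f y + ε) := by
  refine hasSum_le (fun a => ?_) (hφ.hasSum_ruelle hx hf)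
    (((hφ.hasSum_ruelle hy hf).add (hφ.hasSum_branchWeight_mul_const hy ε)).mul_left
      (Real.exp (δ + t)))
  have hiff : cons a x ∈ Sig W A k ↔ cons a y ∈ Sig W A k := by
    rw [cons_mem_sig_iff hx, cons_mem_sig_iff hy, hxy]
  by_cases hax : cons a x ∈ Sig W A k
  · have hay := hiff.mp hax
    simp only [branchWeight, if_pos hax, if_pos hay]
    calc Real.exp (φ k (cons a x)) * f (cons a x)
        ≤ Real.exp (δ + φ k (cons a y)) * (Real.exp t * (f (cons a y) + ε)) :=
          mul_le_mul (Real.exp_le_exp.mpr (hδ a hax hay)) (ht a hax hay) (hf hax).1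
            (Real.exp_pos _).le
      _ = Real.exp (δ + t) * (Real.exp (φ k (cons a y)) * f (cons a y)
            + Real.exp (φ k (cons a y)) * ε) := by
          rw [Real.exp_add, Real.exp_add]
          ring
  · simp [branchWeight, hax, hiff.not.mp hax]

end IsNormalized

end Average

theorem sub_le_mul_add_of_le_exp_mul_add {p q t ε K : ℝ} (ht : 0 ≤ t) (hp : 0 ≤ p) (hpK : p ≤ K)
    (h : p ≤ Real.exp t * (q + ε)) : p - q ≤ t * K + ε := by
  have hexp : (1 - t) * p ≤ q + ε :=
    calc (1 - t) * p ≤ Real.exp (-t) * p :=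
          mul_le_mul_of_nonneg_right (Real.one_sub_le_exp_neg t) hp
      _ ≤ q + ε := by rwa [Real.exp_neg, inv_mul_le_iff₀ (Real.exp_pos t)]
  have htp : t * p ≤ t * K := mul_le_mul_of_nonneg_left hpK ht
  linarith

/-- A normalized sequence of potentials whose `n`-th member is locally `(r,2)`-Hölder with constant
`κ n`. This is property `(H*)` without topological mixing and big preimages. -/
structure IsNormalizedHolder (W : ℕ → Set ℕ) (A : ℕ → ℕ → ℕ → Prop) (φ : ℕ → Seq → ℝ) (r : ℝ)
    (κ : ℕ → ℝ) : Prop where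
  r_pos : 0 < r
  r_lt_one : r < 1
  κ_nonneg : ∀ n, 0 ≤ κ n
  normalized : IsNormalized W A φ
  holder : ∀ n, HolderOn (Sig W A n) r (κ n) 2 (φ n)

namespace IsNormalizedHolder

variable {W : ℕ → Set ℕ} {A : ℕ → ℕ → ℕ → Prop} {φ : ℕ → Seq → ℝ} {r : ℝ} {κ : ℕ → ℝ}
  {k j : ℕ} {x y : Seq} {f : Seq → ℝ} {C E K α α' : ℝ}

theorem ruelleIter_le_exp_mul_add (h : IsNormalizedHolder W A φ r κ)
    (hf : Set.MapsTo f (Sig W A k) (Set.Icc 0 C))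
    (hE : ∀ x ∈ Sig W A k, ∀ y ∈ Sig W A k, ∀ l, agrees x y l → f x ≤ f y + E * r ^ l)
    (n : ℕ) (hj : 1 ≤ j) (hx : x ∈ Sig W A (k + n)) (hy : y ∈ Sig W A (k + n))
    (hxy : agrees x y j) :
    RuelleIter W A φ k n f x ≤
      Real.exp (r ^ j * logB κ r (k + n)) * (RuelleIter W A φ k n f y + E * r ^ (n + j)) := by
  have hr0 := h.r_pos.le
  induction n generalizing j x y with
  | zero =>
    have hfxy : f x ≤ f y + E * r ^ (0 + j) := by simpa only [zero_add] using hE x hx y hy j hxy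
    exact hfxy.trans (le_mul_of_one_le_left ((hf hx).1.trans hfxy)
      (Real.one_le_exp (mul_nonneg (pow_nonneg hr0 j) (logB_nonneg h.κ_nonneg hr0 _))))
  | succ n ih =>
    have hlogB : r ^ j * logB κ r (k + (n + 1)) =
        κ (k + n) * r ^ (j + 1) + r ^ (j + 1) * logB κ r (k + n) := by
      rw [← add_assoc, logB_succ]
      ring
    rw [hlogB]
    refine h.normalized.ruelle_le_exp_mul_ruelle_add hx hy (hxy 0 hj)
      (h.normalized.mapsTo_ruelleIter hf n) (fun a hax hay => ?_) fun a hax hay => ?_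
    · exact sub_le_iff_le_add.mp ((le_abs_self _).trans
        (h.holder (k + n) (j + 1) (by lia) _ hax _ hay (agrees_cons hxy a)))
    · rw [show n + 1 + j = n + (j + 1) by lia]
      exact ih (by lia) hax hay (agrees_cons hxy a)

theorem ruelleIter_sub_le_mul_pow (h : IsNormalizedHolder W A φ r κ) {n : ℕ} (hα : 0 ≤ α)
    (hαn : α * r ^ n ≤ 1) (hf : IsLipBound (Sig W A k) (truncDist r α) f K) (hj : 1 ≤ j)
    (hx : x ∈ Sig W A (k + n)) (hy : y ∈ Sig W A (k + n)) (hxy : agrees x y j) :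
    RuelleIter W A φ k n f x - RuelleIter W A φ k n f y ≤
      K * ((1 + logB κ r (k + n)) * r ^ j) := by
  have hr0 := h.r_pos.le
  have hK := hf.1
  obtain ⟨c, hc⟩ := hf.exists_mapsTo_Icc (truncDist_le_one r α)
  have hrange : Set.MapsTo (fun z => f z - c) (Sig W A k) (Set.Icc 0 K) := fun z hz =>
    ⟨sub_nonneg.mpr (hc hz).1, sub_le_iff_le_add'.mpr (hc hz).2⟩
  have hE : ∀ x ∈ Sig W A k, ∀ y ∈ Sig W A k, ∀ l, agrees x y l →
      f x - c ≤ f y - c + K * α * r ^ l := fun x hx y hy l hl => by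
    have hd : truncDist r α x y ≤ α * r ^ l := (min_le_right _ _).trans
      (mul_le_mul_of_nonneg_left (dr_le_pow_of_agrees hr0 h.r_lt_one.le hl) hα)
    have hfxy := (le_abs_self _).trans (hf.2 x hx y hy)
    have hKd := mul_le_mul_of_nonneg_left hd hK
    linarith
  have hmem := h.normalized.mapsTo_ruelleIter hrange n hx
  have hshift := h.normalized.ruelleIter_sub_const hc c n
  have hlogB := mul_nonneg (pow_nonneg hr0 j) (logB_nonneg h.κ_nonneg hr0 (k + n))
  calc RuelleIter W A φ k n f x - RuelleIter W A φ k n f y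
      = RuelleIter W A φ k n (fun z => f z - c) x
        - RuelleIter W A φ k n (fun z => f z - c) y := by
        rw [hshift hx, hshift hy]
        ring
    _ ≤ r ^ j * logB κ r (k + n) * K + K * α * r ^ (n + j) :=
        sub_le_mul_add_of_le_exp_mul_add hlogB hmem.1 hmem.2
          (h.ruelleIter_le_exp_mul_add hrange hE n hj hx hy hxy)
    _ = r ^ j * logB κ r (k + n) * K + K * r ^ j * (α * r ^ n) := by ring
    _ ≤ r ^ j * logB κ r (k + n) * K + K * r ^ j :=
        add_le_add le_rfl (mul_le_of_le_one_right (by positivity) hαn)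
    _ = K * ((1 + logB κ r (k + n)) * r ^ j) := by ring

theorem ruelleIter_sub_le_mul_truncDist (h : IsNormalizedHolder W A φ r κ) {n : ℕ} (hα : 0 ≤ α)
    (hαn : α * r ^ n ≤ 1) (hα' : 1 + logB κ r (k + n) ≤ α')
    (hf : IsLipBound (Sig W A k) (truncDist r α) f K)
    (hx : x ∈ Sig W A (k + n)) (hy : y ∈ Sig W A (k + n)) :
    RuelleIter W A φ k n f x - RuelleIter W A φ k n f y ≤ K * truncDist r α' x y := by
  rcases le_or_gt 1 (α' * dr r x y) with hfar | hnear
  · obtain ⟨c, hc⟩ := hf.exists_mapsTo_Icc (truncDist_le_one r α)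
    have hcx := (h.normalized.mapsTo_ruelleIter hc n hx).2
    have hcy := (h.normalized.mapsTo_ruelleIter hc n hy).1
    rw [truncDist, min_eq_left hfar]
    linarith
  rw [truncDist, min_eq_right hnear.le]
  by_cases hxy : x = y
  · simp [hxy, dr_self]
  obtain ⟨j, hagree, hd⟩ := exists_agrees_dr_eq_pow r hxy
  rw [hd] at hnear ⊢
  have hj : j ≠ 0 := by
    rintro rfl
    have hlogB := logB_nonneg h.κ_nonneg h.r_pos.le (k + n)
    linarith [pow_zero r]
  refine (h.ruelleIter_sub_le_mul_pow hα hαn hf (Nat.one_le_iff_ne_zero.mpr hj) hx hy hagree).trans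
    (mul_le_mul_of_nonneg_left ?_ hf.1)
  exact mul_le_mul_of_nonneg_right hα' (pow_nonneg h.r_pos.le j)

theorem isLipBound_ruelleIter (h : IsNormalizedHolder W A φ r κ) {n : ℕ} (hα : 0 ≤ α)
    (hαn : α * r ^ n ≤ 1) (hα' : 1 + logB κ r (k + n) ≤ α')
    (hf : IsLipBound (Sig W A k) (truncDist r α) f K) :
    IsLipBound (Sig W A (k + n)) (truncDist r α') (RuelleIter W A φ k n f) K :=
  ⟨hf.1, fun x hx y hy => abs_sub_le_iff.mpr
    ⟨h.ruelleIter_sub_le_mul_truncDist hα hαn hα' hf hx hy,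
      truncDist_comm r α' x y ▸ h.ruelleIter_sub_le_mul_truncDist hα hαn hα' hf hy hx⟩⟩

end IsNormalizedHolder

theorem ruelle_iter_lipschitz_nonexpansive_general {W : ℕ → Set ℕ} {A : ℕ → ℕ → ℕ → Prop}
    {φ : ℕ → Seq → ℝ} {r : ℝ} {κ : ℕ → ℝ} (h : IsNormalizedHolder W A φ r κ) {k n m : ℕ}
    {α α' : ℝ} (hα : 0 < α) (hαn : α * r ^ n ≤ 1) (hα' : 1 + logB κ r (k + n) ≤ α')
    {f : Seq → ℝ} {κf Mf : ℝ} (hf : HolderOn (Sig W A k) r κf m f)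
    (hMf : ∀ x ∈ Sig W A k, |f x| ≤ Mf) :
    LipC (Sig W A (k + n)) (truncDist r α') (RuelleIter W A φ k n f) ≤
      LipC (Sig W A k) (truncDist r α) f := by
  obtain ⟨K, hK⟩ := hf.exists_isLipBound_dr h.r_pos h.r_lt_one.le hMf
  exact lipC_le_lipC ⟨_, hK.truncDist_of_dr h.r_pos.le h.r_lt_one.le hα⟩
    fun _ => h.isLipBound_ruelleIter hα.le hαn hα'

theorem mul_pow_le_one_of_neg_log_div_log_le {α r : ℝ} {n : ℕ} (hα : 0 < α) (hr0 : 0 < r)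
    (hr1 : r < 1) (h : -Real.log α / Real.log r ≤ n) : α * r ^ n ≤ 1 := by
  rw [div_le_iff_of_neg (Real.log_neg hr0 hr1)] at h
  have hrn : 0 < r ^ n := pow_pos hr0 n
  rw [← Real.log_nonpos_iff (mul_pos hα hrn).le, Real.log_mul hα.ne' hrn.ne', Real.log_pow]
  linarith

namespace HstarSystem

variable (S : HstarSystem)

theorem isNormalizedHolder : IsNormalizedHolder S.W S.A S.φ S.r S.κ where
  r_pos := S.hr.1
  r_lt_one := S.hr.2
  κ_nonneg := S.κnonneg
  normalized := S.normalized
  holder n := by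
    by_cases hn : n ∈ S.K
    · exact (S.holder1 n hn).mono_index one_le_two
    · exact S.holder2 n hn

theorem alphaC_pos (k : ℕ) : 0 < S.alphaC k :=
  div_pos (Real.exp_pos _) S.hβ.1

theorem one_add_logB_le_alphaC (k : ℕ) : 1 + logB S.κ S.r k ≤ S.alphaC k :=
  calc 1 + logB S.κ S.r k ≤ Bconst S.κ S.r k := by
        rw [add_comm]
        exact Real.add_one_le_exp _
    _ ≤ S.alphaC k := le_div_self (Real.exp_pos _).le S.hβ.1 S.hβ.2.le

theorem alphaC_mul_pow_nseq_le_one (k : ℕ) : S.alphaC k * S.r ^ S.nseq k ≤ 1 := by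
  refine mul_pow_le_one_of_neg_log_div_log_le (S.alphaC_pos k) S.hr.1 S.hr.2 ?_
  have hfloor : ⌊-Real.log (S.alphaC k) / Real.log S.r⌋ < (S.nseq k : ℤ) := S.hn k
  exact_mod_cast (Int.floor_lt.mp hfloor).le

end HstarSystem

/-- (Lemma, part (i).) Under property `(H*)`, the Ruelle iterate over `n_k`
steps does not increase the Lipschitz constant with respect to the rescaled truncated
metrics `d̄`. -/
theorem ruelle_iter_lipschitz_nonexpansive (S : HstarSystem) (k : ℕ)
    (f : Seq → ℝ) (κf Mf : ℝ)
    (hf : HolderOn (Sig S.W S.A k) S.r κf 1 f)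
    (hMf : ∀ x ∈ Sig S.W S.A k, |f x| ≤ Mf) :
    LipC (Sig S.W S.A (k + S.nseq k)) (S.dbar (k + S.nseq k))
        (RuelleIter S.W S.A S.φ k (S.nseq k) f) ≤
      LipC (Sig S.W S.A k) (S.dbar k) f :=
  ruelle_iter_lipschitz_nonexpansive_general S.isNormalizedHolder (S.alphaC_pos k)
    (S.alphaC_mul_pow_nseq_le_one k) (S.one_add_logB_le_alphaC (k + S.nseq k)) hf hMf

end NSShift
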